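/- Let k ≥ 2, n ≥ 1, κ̄ = ⌈k/2⌉, and 𝓛 = I_n ⊗ L_A^{(k)} + Σ_{i=1}^{n−1} z_i z_iᵀ with z_i = e_{ik} − e_{ik+κ̄}. Let 𝓛' be the (nk+1)×(nk+1) Laplacian obtained by appending one new vertex adjacent only to vertex κ̄, i.e., 𝓛' has block form [[1, −e_{κ̄}ᵀ], [−e_{κ̄}, 𝓛 + e_{κ̄}e_{κ̄}ᵀ]]. Then the pair (𝓛', e_1) is controllable, where e_1 corresponds to the appended vertex. -/

import Mathlib

/-!
By the eigenvector test it suffices that an eigenvector of `𝓛'` vanishing at the appended vertex is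
zero; the row of that vertex then gives an eigenvector of `𝓛` vanishing at the vertex `κ̄` of the
first copy.

Listed in order of addition, with `k = e + 2`, the antiregular graph is a threshold graph in which
the vertex `k` is added at time `e` and the vertex `κ̄` at time `0` or `1`. On a threshold graph the
Helmert contrasts `x ↦ x 0 + ⋯ + x (r - 1) - r x r` are left eigenvectors of the Laplacian, and here
their eigenvalues for `r ≥ 1` are distinct and nonzero. A copy whose input value and inflow vanish
satisfies `L y + β 1_e = μ y`, where `β` is the outflow to the next copy. If `β = 0`, at most one
contrast of `y` with `r ≥ 1` survives; then `μ ≠ 0`, so the entries of `y` sum to zero, and together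
with the vanishing input value this gives `y = 0`. If `β ≠ 0`, then `μ` is none of the eigenvalues
with `1 ≤ r < e`, since pairing the equation of the next copy with such a contrast would leave only
a nonzero multiple of its inflow `β`. So these contrasts of `y` vanish, `y` is zero before time `e`,
and the remaining rows give `y = 0` and `β = 0`. Thus the zero propagates along the chain.
-/

/-- Laplacian matrix of the `k`-vertex antiregular graph (0-indexed vertices;
1-indexed vertices `i+1`, `j+1` adjacent iff `(i+1)+(j+1) ≤ k+1`). -/
def antiregLap (k : ℕ) : Matrix (Fin k) (Fin k) ℝ :=
  Matrix.of fun i j =>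
    if i = j then
      ((Finset.univ.filter fun m : Fin k => m ≠ i ∧ i.val + m.val + 2 ≤ k + 1).card : ℝ)
    else if i.val + j.val + 2 ≤ k + 1 then -1 else 0

/-- The vector `z_i = e_{ik} - e_{ik+κ̄}` (1-indexed, `κ̄ = ⌈k/2⌉`, `i = p+1`),
on the product index set: copy `p`, vertex `k` minus copy `p+1`, vertex `κ̄`. -/
def zvec (n k : ℕ) (hk : 2 ≤ k) (p : Fin (n - 1)) : Fin n × Fin k → ℝ :=
  fun q =>
    (if q = (⟨p.val, by have := p.isLt; omega⟩, ⟨k - 1, by omega⟩) then (1 : ℝ) else 0) -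
    (if q = (⟨p.val + 1, by have := p.isLt; omega⟩, ⟨(k + 1) / 2 - 1, by omega⟩) then 1 else 0)

/-- `L̄ = I_n ⊗ L_A^{(k)}`, the Laplacian of `n` disjoint copies of the
`k`-vertex antiregular graph, indexed by (copy, vertex). -/
def copiesLap (n k : ℕ) : Matrix (Fin n × Fin k) (Fin n × Fin k) ℝ :=
  Matrix.kroneckerMap (· * ·) (1 : Matrix (Fin n) (Fin n) ℝ) (antiregLap k)

/-- `𝓛 = I_n ⊗ L_A^{(k)} + Σ_{i=1}^{n-1} z_i z_iᵀ`, the Laplacian of `n`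
interconnected copies of the `k`-vertex antiregular graph. -/
def interLap (n k : ℕ) (hk : 2 ≤ k) : Matrix (Fin n × Fin k) (Fin n × Fin k) ℝ :=
  copiesLap n k + ∑ p : Fin (n - 1), Matrix.vecMulVec (zvec n k hk p) (zvec n k hk p)

/-- `(M, b)` is controllable: `b, Mb, M²b, …` span the whole space. -/
def IsControllable {ι : Type} [Fintype ι] [DecidableEq ι]
    (M : Matrix ι ι ℝ) (b : ι → ℝ) : Prop :=
  Submodule.span ℝ (Set.range fun j : Fin (Fintype.card ι) => (M ^ (j : ℕ)).mulVec b) = ⊤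

/-- The vertex `κ̄ = ⌈k/2⌉` of the first copy (0-indexed product coordinates). -/
def firstKappa (k n : ℕ) (hk : 2 ≤ k) (hn : 1 ≤ n) : Fin n × Fin k :=
  (⟨0, hn⟩, ⟨(k + 1) / 2 - 1, by omega⟩)

/-- `𝓛'`: the Laplacian of the graph obtained from the interconnection of `n`
copies of the `k`-vertex antiregular graph by appending one new vertex (listed
first, index `Sum.inl ()`) adjacent only to the vertex `κ̄` of the first copy;
in block form `[[1, -e_κ̄ᵀ], [-e_κ̄, 𝓛 + e_κ̄ e_κ̄ᵀ]]`. -/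
def extInterLap (k n : ℕ) (hk : 2 ≤ k) (hn : 1 ≤ n) :
    Matrix (Unit ⊕ Fin n × Fin k) (Unit ⊕ Fin n × Fin k) ℝ :=
  fun p q =>
    match p, q with
    | Sum.inl _, Sum.inl _ => 1
    | Sum.inl _, Sum.inr j => if j = firstKappa k n hk hn then -1 else 0
    | Sum.inr i, Sum.inl _ => if i = firstKappa k n hk hn then -1 else 0
    | Sum.inr i, Sum.inr j =>
        interLap n k hk i j +
          if i = firstKappa k n hk hn ∧ j = firstKappa k n hk hn then 1 else 0

open Finset Matrix

theorem eq_top_of_forall_eigenvector {𝕜 E : Type*} [RCLike 𝕜] [NormedAddCommGroup E]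
    [InnerProductSpace 𝕜 E] [FiniteDimensional 𝕜 E] {T : Module.End 𝕜 E} (hT : T.IsSymmetric)
    {K : Submodule 𝕜 E} (hK : K ∈ T.invtSubmodule)
    (h : ∀ (μ : 𝕜), ∀ x ∈ Kᗮ, T x = μ • x → x = 0) : K = ⊤ := by
  have hinv := hT.orthogonalComplement_mem_invtSubmodule hK
  have hsub : Subsingleton Kᗮ := by
    refine (hT.restrict_invariant hinv).subsingleton_of_no_eigenvalue_finiteDimensional fun μ => ?_
    refine (Submodule.eq_bot_iff _).2 fun x hx => Subtype.ext (h μ x x.2 ?_)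
    exact congrArg Subtype.val (Module.End.mem_eigenspace_iff.1 hx)
  exact K.orthogonal_eq_bot_iff.1 (Submodule.subsingleton_iff_eq_bot.1 hsub)

theorem span_range_pow_mulVec {R ι : Type*} [CommRing R] [Fintype ι] [DecidableEq ι]
    (M : Matrix ι ι R) (b : ι → R) :
    Submodule.span R (Set.range fun j : Fin (Fintype.card ι) => (M ^ (j : ℕ)) *ᵥ b) =
      (Subalgebra.toSubmodule (Algebra.adjoin R {M})).map ((mulVecBilin R R).flip b) := by
  nontriviality R
  rw [← Submodule.span_range_natDegree_eq_adjoin M.charpoly_monic M.aeval_self_charpoly,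
    M.charpoly_natDegree_eq_dim, Submodule.map_span]
  congr 1
  ext v
  simp [Fin.exists_iff]

theorem isControllable_of_forall_eigenvector {ι : Type} [Fintype ι] [DecidableEq ι]
    {M : Matrix ι ι ℝ} {b : ι → ℝ} (hM : M.IsSymm)
    (h : ∀ (μ : ℝ) (x : ι → ℝ), M *ᵥ x = μ • x → b ⬝ᵥ x = 0 → x = 0) :
    IsControllable M b := by
  let E := (WithLp.linearEquiv 2 ℝ (ι → ℝ)).symm
  have hT : M.toEuclideanLin.IsSymmetric := isSymmetric_toEuclideanLin_iff.2 <| by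
    rwa [IsHermitian, conjTranspose_eq_transpose_of_trivial]
  rw [IsControllable, span_range_pow_mulVec, ← Submodule.map_eq_top_iff (e := E)]
  refine eq_top_of_forall_eigenvector hT ?_ fun μ x hx hμ => ?_
  · rintro _ ⟨_, ⟨A, hA, rfl⟩, rfl⟩
    exact ⟨_, ⟨M * A, Subalgebra.mul_mem _ (Algebra.subset_adjoin rfl) hA, rfl⟩, by simp [E]⟩
  · refine E.symm.injective (h μ (E.symm x) (congrArg E.symm hμ) ?_)
    have hb := hx (E b) ⟨b, ⟨1, Subalgebra.one_mem _, by simp⟩, rfl⟩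
    simpa [E, PiLp.inner_apply, dotProduct, mul_comm] using hb

section ThresholdLap

variable {R : Type*} [CommRing R]

/-- The Laplacian of a weighted threshold graph with vertices `0, …, k - 1` in order of addition:
on being added, the vertex `j` is joined to each earlier one by an edge of weight `w j`. It acts on
sequences, of which only the first `k` terms matter. -/
def thresholdLap (k : ℕ) (w x : ℕ → R) (a : ℕ) : R :=
  ∑ b ∈ range k, w (max a b) * (x a - x b)

/-- The eigenvalue of `thresholdLap k w` on the Helmert contrast of order `r`. -/
def thresholdEigenvalue (k : ℕ) (w : ℕ → R) (r : ℕ) : R :=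
  (r + 1) * w r + ∑ b ∈ Ico (r + 1) k, w b

/-- The unnormalised Helmert contrast of order `r`, which compares `x r` with the mean of
`x 0, …, x (r - 1)`. These functionals are the left eigenvectors of every threshold Laplacian. -/
def helmert (r : ℕ) : (ℕ → R) →ₗ[R] R :=
  ∑ a ∈ range r, LinearMap.proj a - (r : R) • LinearMap.proj r

theorem helmert_apply (r : ℕ) (x : ℕ → R) : helmert r x = ∑ a ∈ range r, x a - r * x r := by
  simp [helmert]

theorem helmert_single_of_lt {r e : ℕ} (h : r < e) (c : R) : helmert r (Pi.single e c) = 0 := by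
  rw [helmert_apply, Pi.single_eq_of_ne h.ne, mul_zero, sub_zero]
  exact sum_eq_zero fun a ha => Pi.single_eq_of_ne ((mem_range.1 ha).trans h).ne _

theorem helmert_single_self (r : ℕ) (c : R) : helmert r (Pi.single r c) = -(r * c) := by
  rw [helmert_apply, Pi.single_eq_same, sum_eq_zero fun a ha =>
    Pi.single_eq_of_ne (mem_range.1 ha).ne _, zero_sub]

theorem helmert_single_of_gt {r m : ℕ} (h : m < r) (c : R) : helmert r (Pi.single m c) = c := by
  rw [helmert_apply, Pi.single_eq_of_ne h.ne', mul_zero, sub_zero, sum_pi_single',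
    if_pos (mem_range.2 h)]

theorem helmert_congr {r : ℕ} {x y : ℕ → R} (h : ∀ a ≤ r, x a = y a) :
    helmert r x = helmert r y := by
  rw [helmert_apply, helmert_apply, h r le_rfl,
    sum_congr rfl fun a ha => h a (mem_range.1 ha).le]

theorem sum_range_thresholdLap_self (r : ℕ) (w x : ℕ → R) :
    ∑ a ∈ range r, thresholdLap r w x a = 0 := by
  simp only [thresholdLap, mul_sub, sum_sub_distrib]
  rw [sub_eq_zero, sum_comm]
  simp only [max_comm]

theorem thresholdLap_eq_add_sum_Ico {a r k : ℕ} (har : a ≤ r) (hrk : r ≤ k) (w x : ℕ → R) :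
    thresholdLap k w x a = thresholdLap r w x a + ∑ b ∈ Ico r k, w b * (x a - x b) := by
  rw [thresholdLap, ← sum_range_add_sum_Ico _ hrk, thresholdLap]
  congr 1
  exact sum_congr rfl fun b hb => by rw [max_eq_right (har.trans (mem_Ico.1 hb).1)]

theorem thresholdLap_apply_self (r : ℕ) (w x : ℕ → R) :
    thresholdLap r w x r = -w r * helmert r x := by
  rw [thresholdLap, sum_congr rfl fun b hb => by rw [max_eq_left (mem_range.1 hb).le], ← mul_sum,
    sum_sub_distrib, sum_const, card_range, nsmul_eq_mul, helmert_apply]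
  ring

theorem helmert_thresholdLap {r k : ℕ} (hr : r < k) (w x : ℕ → R) :
    helmert r (thresholdLap k w x) = thresholdEigenvalue k w r * helmert r x := by
  have hprefix : ∑ a ∈ range r, thresholdLap k w x a
      = ∑ b ∈ Ico r k, w b * ∑ a ∈ range r, (x a - x b) := by
    rw [sum_congr rfl fun a ha => thresholdLap_eq_add_sum_Ico (mem_range.1 ha).le hr.le w x,
      sum_add_distrib, sum_range_thresholdLap_self, zero_add, sum_comm]
    simp only [mul_sum]
  have htail (b : ℕ) : w b * ∑ a ∈ range r, (x a - x b) =
      w b * helmert r x + r * (w b * (x r - x b)) := by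
    rw [helmert_apply, sum_sub_distrib, sum_const, card_range, nsmul_eq_mul]
    ring
  rw [helmert_apply, hprefix, thresholdLap_eq_add_sum_Ico le_rfl hr.le, thresholdLap_apply_self,
    sum_congr rfl fun b _ => htail b, sum_add_distrib, ← mul_sum, ← sum_mul, thresholdEigenvalue,
    sum_eq_sum_Ico_succ_bot hr w]
  ring

end ThresholdLap

section Observability

variable {R : Type*} [CommRing R] {k : ℕ} {w y f : ℕ → R} {μ : R}

theorem thresholdEigenvalue_sub_mul_helmert {r : ℕ} (hr : r < k)
    (h : ∀ i < k, thresholdLap k w y i + f i = μ * y i) :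
    (thresholdEigenvalue k w r - μ) * helmert r y + helmert r f = 0 := by
  have heq : helmert r (thresholdLap k w y + f) = helmert r (μ • y) :=
    helmert_congr fun i hi => h i (hi.trans_lt hr)
  rw [map_add, helmert_thresholdLap hr, map_smul, smul_eq_mul] at heq
  linear_combination heq

variable [NoZeroDivisors R] [CharZero R]

theorem mul_apply_eq_sum_range_of_helmert {i j : ℕ} (hj : j ≠ 0)
    (hsum : i * ∑ a ∈ range j, y a = j * ∑ a ∈ range i, y a) (h : helmert j y = 0) :
    i * y j = ∑ a ∈ range i, y a := by
  rw [helmert_apply] at h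
  refine mul_left_cancel₀ (Nat.cast_ne_zero.2 hj : (j : R) ≠ 0) ?_
  linear_combination hsum - i * h

theorem mul_sum_range_of_helmert {i n : ℕ} (hi : i ≠ 0) (hin : i ≤ n)
    (h : ∀ j, i ≤ j → j < n → helmert j y = 0) :
    i * ∑ a ∈ range n, y a = n * ∑ a ∈ range i, y a := by
  induction n, hin using Nat.le_induction with
  | base => rfl
  | succ n hin ih =>
    have hsum := ih fun j hij hjn => h j hij (hjn.trans n.lt_succ_self)
    have happly := mul_apply_eq_sum_range_of_helmert (by omega) hsum (h n hin n.lt_succ_self)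
    rw [sum_range_succ]
    push_cast
    linear_combination hsum + happly

theorem apply_eq_apply_zero_of_helmert {n j : ℕ}
    (h : ∀ j, 1 ≤ j → j < n → helmert j y = 0) (hj : j < n) : y j = y 0 := by
  rcases Nat.eq_zero_or_pos j with rfl | hpos
  · rfl
  · have hsum := mul_sum_range_of_helmert one_ne_zero hpos fun i hi hij => h i hi (hij.trans hj)
    simpa using mul_apply_eq_sum_range_of_helmert hpos.ne' hsum (h j hpos hj)

theorem eq_zero_of_helmert {m n : ℕ} (h : ∀ j, 1 ≤ j → j < n → helmert j y = 0)
    (hmn : m < n) (hm : y m = 0) : ∀ j < n, y j = 0 := fun j hj => by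
  rw [apply_eq_apply_zero_of_helmert h hj, ← apply_eq_apply_zero_of_helmert h hmn, hm]

theorem helmert_eq_zero_of_sum_eq_zero {m r : ℕ} (hr : 1 ≤ r) (hm : m ≤ 1)
    (hrk : r < k) (hym : y m = 0) (hsum : ∑ a ∈ range k, y a = 0)
    (h : ∀ j, 1 ≤ j → j < k → j ≠ r → helmert j y = 0) : helmert r y = 0 := by
  have hupper : ∑ a ∈ range (r + 1), y a = 0 := by
    have hmul := mul_sum_range_of_helmert r.succ_ne_zero hrk
      fun j hrj hjk => h j (by omega) hjk (by omega)
    rw [hsum, mul_zero, eq_comm, mul_eq_zero, Nat.cast_eq_zero] at hmul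
    exact hmul.resolve_left (by omega)
  have hlower : ∀ j, 1 ≤ j → j < r → helmert j y = 0 :=
    fun j hj hjr => h j hj (hjr.trans hrk) hjr.ne
  rw [sum_range_succ] at hupper
  rcases (hm.trans hr).lt_or_eq with hmr | rfl
  · have hzero : ∑ a ∈ range r, y a = 0 :=
      sum_eq_zero fun a ha => eq_zero_of_helmert hlower hmr hym a (mem_range.1 ha)
    rw [hzero, zero_add] at hupper
    rw [helmert_apply, hzero, hupper, mul_zero, sub_zero]
  · rw [hym, add_zero] at hupper
    rw [helmert_apply, hupper, hym, mul_zero, sub_zero]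

theorem eq_zero_of_thresholdLap_eq_mul {m : ℕ} (hm : m ≤ 1) (hmk : m < k)
    (hinj : Set.InjOn (thresholdEigenvalue k w) (Set.Ico 1 k))
    (hne : ∀ r ∈ Set.Ico 1 k, thresholdEigenvalue k w r ≠ 0)
    (h : ∀ i < k, thresholdLap k w y i = μ * y i) (hym : y m = 0) :
    ∀ i < k, y i = 0 := by
  have hmul (j : ℕ) (hj : j < k) : (thresholdEigenvalue k w j - μ) * helmert j y = 0 := by
    simpa using thresholdEigenvalue_sub_mul_helmert (w := w) (f := 0) (μ := μ) hj (by simpa)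
  refine eq_zero_of_helmert (fun r hr hrk => ?_) hmk hym
  refine (mul_eq_zero.1 (hmul r hrk)).elim (fun hμ => ?_) id
  rw [sub_eq_zero] at hμ
  refine helmert_eq_zero_of_sum_eq_zero hr hm hrk hym ?_ fun j hj hjk hjr => ?_
  · have htotal : μ * ∑ a ∈ range k, y a = 0 := by
      rw [mul_sum, ← sum_range_thresholdLap_self k w y]
      exact sum_congr rfl fun i hi => (h i (mem_range.1 hi)).symm
    exact (mul_eq_zero.1 htotal).resolve_left (hμ ▸ hne r ⟨hr, hrk⟩)
  · refine (mul_eq_zero.1 (hmul j hjk)).resolve_left fun hj' => hjr ?_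
    exact hinj ⟨hj, hjk⟩ ⟨hr, hrk⟩ ((sub_eq_zero.1 hj').trans hμ.symm)

theorem eq_zero_of_helmert_single_eq_zero {m r : ℕ} {c : R} (hmr : m ≤ r) (hr : r ≠ 0)
    (h : helmert r (Pi.single m c) = 0) : c = 0 := by
  rcases hmr.lt_or_eq with hlt | rfl
  · rwa [helmert_single_of_gt hlt] at h
  · rw [helmert_single_self, neg_eq_zero, mul_eq_zero, Nat.cast_eq_zero] at h
    exact h.resolve_left hr

/-- The conditions on the weights `w` of a threshold graph on `e + 2` vertices under which copies of
it, joined by unit edges from the output vertex `e` of each copy to the input vertex `m` of the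
next, form a chain observable from the first input. -/
structure IsChainLink (e m : ℕ) (w : ℕ → R) : Prop where
  input_le_one : m ≤ 1
  input_ne_output : m ≠ e
  weight_output : w e = 0
  weight_last_ne_zero : w (e + 1) ≠ 0
  eigenvalue_injOn : Set.InjOn (thresholdEigenvalue (e + 2) w) (Set.Ico 1 (e + 2))
  eigenvalue_ne_zero : ∀ r ∈ Set.Ico 1 (e + 2), thresholdEigenvalue (e + 2) w r ≠ 0

variable {e m : ℕ} {β γ : R} {z : ℕ → R}

namespace IsChainLink

theorem inflow_eq_zero (hw : IsChainLink e m w) {r : ℕ} (hr : 1 ≤ r) (hre : r < e)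
    (hμ : thresholdEigenvalue (e + 2) w r = μ)
    (h : ∀ i < e + 2,
      thresholdLap (e + 2) w z i + (Pi.single e γ - Pi.single m β : ℕ → R) i = μ * z i) :
    β = 0 := by
  have hpair := thresholdEigenvalue_sub_mul_helmert (by omega : r < e + 2) h
  rw [hμ, sub_self, zero_mul, zero_add, map_sub, helmert_single_of_lt hre, zero_sub,
    neg_eq_zero] at hpair
  exact eq_zero_of_helmert_single_eq_zero (hw.input_le_one.trans hr) (by omega) hpair

omit [CharZero R] in
theorem eq_zero_of_forall_lt_output (hw : IsChainLink e m w)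
    (h : ∀ i < e + 2, thresholdLap (e + 2) w y i + (Pi.single e β : ℕ → R) i = μ * y i)
    (hym : y m = 0) (hy : ∀ i < e, y i = 0) : ∀ i < e + 2, y i = 0 := by
  have hm := hw.input_le_one
  have hme := hw.input_ne_output
  have hlast : y (e + 1) = 0 := by
    rcases e.eq_zero_or_pos with rfl | he
    · rwa [show 0 + 1 = m by omega]
    · have hrow := h m (by omega)
      rw [thresholdLap, sum_range_succ, sum_range_succ, hym, Pi.single_eq_of_ne hme,
        max_eq_right (by omega), max_eq_right (by omega), hw.weight_output,
        sum_eq_zero fun b hb => by rw [hy b (mem_range.1 hb), sub_zero, mul_zero]] at hrow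
      simpa [hw.weight_last_ne_zero] using hrow
  have houtput : y e = 0 := by
    have hrow := h (e + 1) (by omega)
    rw [thresholdLap_eq_add_sum_Ico le_rfl (e + 1).le_succ, thresholdLap_apply_self, helmert_apply,
      sum_range_succ, sum_eq_zero fun b hb => hy b (mem_range.1 hb),
      Pi.single_eq_of_ne e.succ_ne_self, hlast] at hrow
    simpa [hw.weight_last_ne_zero, hlast] using hrow
  intro i hi
  obtain hi | rfl | rfl : i < e ∨ i = e ∨ i = e + 1 := by omega
  exacts [hy i hi, houtput, hlast]

theorem eq_zero_and_outflow_eq_zero (hw : IsChainLink e m w)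
    (h : ∀ i < e + 2, thresholdLap (e + 2) w y i + (Pi.single e β : ℕ → R) i = μ * y i)
    (hym : y m = 0)
    (hnext : β = 0 ∨ ∃ (z : ℕ → R) (γ : R), ∀ i < e + 2,
      thresholdLap (e + 2) w z i + (Pi.single e γ - Pi.single m β : ℕ → R) i = μ * z i) :
    (∀ i < e + 2, y i = 0) ∧ β = 0 := by
  have hm := hw.input_le_one
  have hme := hw.input_ne_output
  suffices hy : ∀ i < e + 2, y i = 0 by
    refine ⟨hy, ?_⟩
    have hrow := h e (by omega)
    rw [thresholdLap, sum_eq_zero fun b hb => by rw [hy b (mem_range.1 hb), hy e (by omega),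
      sub_zero, mul_zero], hy e (by omega)] at hrow
    simpa using hrow
  rcases eq_or_ne β 0 with rfl | hβ
  · exact eq_zero_of_thresholdLap_eq_mul hm (by omega) hw.eigenvalue_injOn hw.eigenvalue_ne_zero
      (by simpa using h) hym
  obtain ⟨z, γ, hz⟩ := hnext.resolve_left hβ
  refine hw.eq_zero_of_forall_lt_output h hym fun i hi => ?_
  refine eq_zero_of_helmert (m := m) (n := e) (fun r hr hre => ?_) (by omega) hym i hi
  have hpair := thresholdEigenvalue_sub_mul_helmert (by omega : r < e + 2) h
  rw [helmert_single_of_lt hre, add_zero, mul_eq_zero, sub_eq_zero] at hpair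
  exact hpair.resolve_left fun hμ => hβ (hw.inflow_eq_zero hr hre hμ hz)

theorem chain_eq_zero (hw : IsChainLink e m w) {n : ℕ} {X : ℕ → ℕ → R} {g : ℕ → R}
    (hg₀ : g 0 = 0) (hgn : g n = 0) (hg : ∀ p, p + 1 < n → g (p + 1) = X p e - X (p + 1) m)
    (h : ∀ p < n, ∀ i < e + 2, thresholdLap (e + 2) w (X p) i +
      (Pi.single e (g (p + 1)) - Pi.single m (g p) : ℕ → R) i = μ * X p i)
    (hX : X 0 m = 0) : ∀ p < n, ∀ i < e + 2, X p i = 0 := by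
  have hlink : ∀ p < n, X p m = 0 → g p = 0 → (∀ i < e + 2, X p i = 0) ∧ g (p + 1) = 0 := by
    intro p hp hXp hgp
    refine hw.eq_zero_and_outflow_eq_zero (by simpa [hgp] using h p hp) hXp ?_
    rcases (Nat.succ_le_of_lt hp).lt_or_eq with hlt | rfl
    · exact .inr ⟨X (p + 1), g (p + 2), h (p + 1) hlt⟩
    · exact .inl hgn
  suffices hall : ∀ p < n, (∀ i < e + 2, X p i = 0) ∧ g (p + 1) = 0 from fun p hp => (hall p hp).1
  intro p
  induction p with
  | zero => exact fun hp => hlink 0 hp hX hg₀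
  | succ p ih =>
    intro hp
    obtain ⟨hXp, hgp⟩ := ih (by omega)
    refine hlink (p + 1) hp ?_ hgp
    simpa [hgp, hXp e (by omega)] using hg p hp

end IsChainLink
end Observability

section Antiregular

/-- The (0-indexed) vertex of the antiregular graph on `k` vertices that is added at time `j` when
the graph is built as a threshold graph, by adding isolated and dominating vertices in turn, the
last one dominating. -/
def antiregVertex (k j : ℕ) : ℕ := if (k + j) % 2 = 0 then (k + j) / 2 else (k - 1 - j) / 2

theorem antiregVertex_lt {k j : ℕ} (hj : j < k) : antiregVertex k j < k := by
  unfold antiregVertex; split_ifs <;> omega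

theorem antiregVertex_injOn (k : ℕ) : Set.InjOn (antiregVertex k) (Set.Iio k) := by
  intro i hi j hj h
  simp only [Set.mem_Iio, antiregVertex] at hi hj h
  split_ifs at h <;> omega

theorem antiregVertex_eq_last_iff {e j : ℕ} (hj : j < e + 2) :
    antiregVertex (e + 2) j = e + 2 - 1 ↔ j = e := by
  unfold antiregVertex; split_ifs <;> omega

theorem antiregVertex_eq_middle_iff {e j : ℕ} (hj : j < e + 2) :
    antiregVertex (e + 2) j = (e + 2 + 1) / 2 - 1 ↔ j = (e + 1) % 2 := by
  unfold antiregVertex; split_ifs <;> omega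

theorem antiregVertex_add_lt_iff {k i j : ℕ} (hi : i < k) (hj : j < k) :
    antiregVertex k i + antiregVertex k j < k ↔ (k + max i j) % 2 = 1 := by
  unfold antiregVertex; split_ifs <;> omega

/-- The order of addition `antiregVertex k` as a permutation of the vertices. -/
noncomputable def antiregOrder (k : ℕ) : Equiv.Perm (Fin k) :=
  Equiv.ofBijective (fun j => ⟨antiregVertex k j, antiregVertex_lt j.isLt⟩) <|
    Finite.injective_iff_bijective.1 fun i j h =>
      Fin.ext (antiregVertex_injOn k i.isLt j.isLt (Fin.ext_iff.1 h))

@[simp]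
theorem antiregOrder_val {k : ℕ} (j : Fin k) : (antiregOrder k j : ℕ) = antiregVertex k j := rfl

theorem antiregOrder_last (e : ℕ) :
    antiregOrder (e + 2) ⟨e, by omega⟩ = ⟨e + 2 - 1, by omega⟩ :=
  Fin.ext ((antiregVertex_eq_last_iff (by omega)).2 rfl)

theorem antiregOrder_middle (e : ℕ) :
    antiregOrder (e + 2) ⟨(e + 1) % 2, by omega⟩ = ⟨(e + 2 + 1) / 2 - 1, by omega⟩ :=
  Fin.ext ((antiregVertex_eq_middle_iff (by omega)).2 rfl)

/-- The threshold weights of the antiregular graph on `k` vertices: the vertex added at time `j` is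
dominating if `k - j` is odd and isolated otherwise. -/
def antiregWeight (k j : ℕ) : ℝ := if (k + j) % 2 = 1 then 1 else 0

theorem sum_Ico_antiregWeight {k r : ℕ} (hr : r ≤ k) :
    ∑ b ∈ Ico r k, antiregWeight k b = ((k + 1 - r) / 2 : ℕ) := by
  induction hr using Nat.decreasingInduction with
  | self => simp
  | of_succ r hr ih =>
    rw [sum_eq_sum_Ico_succ_bot hr, ih, antiregWeight]
    split_ifs
    · rw [show (k + 1 - r) / 2 = 1 + (k + 1 - (r + 1)) / 2 by omega, Nat.cast_add, Nat.cast_one]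
    · rw [zero_add, show (k + 1 - r) / 2 = (k + 1 - (r + 1)) / 2 by omega]

theorem thresholdEigenvalue_antiregWeight {k r : ℕ} (hr : r < k) :
    thresholdEigenvalue k (antiregWeight k) r = k - antiregVertex k r := by
  rw [thresholdEigenvalue, sum_Ico_antiregWeight hr, antiregWeight, antiregVertex,
    eq_sub_iff_add_eq]
  split_ifs
  · omega
  · norm_cast; omega
  · norm_cast; omega
  · omega

theorem isChainLink_antiregWeight (e : ℕ) :
    IsChainLink e ((e + 1) % 2) (antiregWeight (e + 2)) where
  input_le_one := by omega
  input_ne_output := by omega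
  weight_output := if_neg (by omega)
  weight_last_ne_zero := by rw [antiregWeight, if_pos (by omega)]; exact one_ne_zero
  eigenvalue_injOn := by
    intro i hi j hj h
    rw [thresholdEigenvalue_antiregWeight hi.2, thresholdEigenvalue_antiregWeight hj.2,
      sub_right_inj, Nat.cast_inj] at h
    exact antiregVertex_injOn _ hi.2 hj.2 h
  eigenvalue_ne_zero r hr := by
    rw [thresholdEigenvalue_antiregWeight hr.2]
    exact sub_ne_zero.2 (Nat.cast_lt.2 (antiregVertex_lt hr.2)).ne'

theorem antiregLap_isSymm (k : ℕ) : (antiregLap k).IsSymm := by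
  refine IsSymm.ext fun i j => ?_
  rcases eq_or_ne i j with rfl | hij
  · rfl
  · simp only [antiregLap, of_apply, if_neg hij, if_neg hij.symm, add_comm (j : ℕ)]

theorem antiregLap_mulVec_apply {k : ℕ} (y : Fin k → ℝ) (i : Fin k) :
    (antiregLap k *ᵥ y) i = ∑ j : Fin k, if (i : ℕ) + j < k then y i - y j else 0 := by
  set N := univ.filter fun m : Fin k => m ≠ i ∧ i.val + m.val + 2 ≤ k + 1 with hN
  have hmem (j : Fin k) : j ∈ N ↔ j ≠ i ∧ (i : ℕ) + j < k := by
    rw [hN, mem_filter_univ]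
    exact and_congr_right' (by omega)
  have hentry (j : Fin k) :
      antiregLap k i j = (if i = j then (#N : ℝ) else 0) - if j ∈ N then 1 else 0 := by
    rcases eq_or_ne i j with rfl | hij
    · simp [antiregLap, hN]
    · have hadj : i.val + j.val + 2 ≤ k + 1 ↔ j ∈ N := by simp [hN, hij.symm]
      simp only [antiregLap, of_apply, if_neg hij, hadj, zero_sub]
      split_ifs
      exacts [rfl, neg_zero.symm]
  have hterm (j : Fin k) : (if (i : ℕ) + j < k then y i - y j else 0) =
      if j ∈ N then y i - y j else 0 := by
    rcases eq_or_ne i j with rfl | hij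
    · simp
    · simp only [hmem, and_iff_right hij.symm]
  calc
    (antiregLap k *ᵥ y) i = #N * y i - ∑ j ∈ N, y j := by
      simp [mulVec, dotProduct, hentry, sub_mul, sum_sub_distrib]
    _ = ∑ j ∈ N, (y i - y j) := by rw [sum_sub_distrib, sum_const, nsmul_eq_mul]
    _ = _ := by simp only [hterm, sum_ite_mem, univ_inter]

theorem antiregLap_mulVec_antiregOrder {k : ℕ} {y : Fin k → ℝ} {Y : ℕ → ℝ}
    (hY : ∀ j : Fin k, y (antiregOrder k j) = Y j) (i : Fin k) :
    (antiregLap k *ᵥ y) (antiregOrder k i) = thresholdLap k (antiregWeight k) Y i := by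
  rw [antiregLap_mulVec_apply, ← Equiv.sum_comp (antiregOrder k), thresholdLap, sum_range]
  refine sum_congr rfl fun j _ => ?_
  simp only [hY, antiregOrder_val, antiregVertex_add_lt_iff i.isLt j.isLt, antiregWeight, ite_mul,
    one_mul, zero_mul]

end Antiregular

section Chain

variable {n k e : ℕ}

theorem copiesLap_mulVec_apply (x : Fin n × Fin k → ℝ) (p : Fin n) (i : Fin k) :
    (copiesLap n k *ᵥ x) (p, i) = (antiregLap k *ᵥ fun j => x (p, j)) i := by
  simp [copiesLap, mulVec, dotProduct, Fintype.sum_prod_type_right, one_apply]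

theorem interLap_isSymm (hk : 2 ≤ k) : (interLap n k hk).IsSymm := by
  refine IsSymm.add ?_ ?_
  · refine IsSymm.ext fun _ _ => ?_
    simp [copiesLap, (antiregLap_isSymm k).apply, one_apply, eq_comm]
  · simp [IsSymm, transpose_sum, transpose_vecMulVec]

theorem extInterLap_isSymm (hk : 2 ≤ k) (hn : 1 ≤ n) : (extInterLap k n hk hn).IsSymm := by
  rw [IsSymm]
  ext (_ | _) (_ | _) <;>
    simp [extInterLap, (interLap_isSymm hk).apply, and_comm]

theorem zvec_dotProduct (hk : 2 ≤ k) (r : Fin (n - 1)) (x : Fin n × Fin k → ℝ) :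
    zvec n k hk r ⬝ᵥ x = x (⟨r, by omega⟩, ⟨k - 1, by omega⟩) -
      x (⟨r + 1, by omega⟩, ⟨(k + 1) / 2 - 1, by omega⟩) := by
  simp [zvec, dotProduct, sub_mul]

theorem zvec_antiregOrder (hk : 2 ≤ e + 2) (r : Fin (n - 1)) (p : Fin n) (i : Fin (e + 2)) :
    zvec n (e + 2) hk r (p, antiregOrder (e + 2) i) =
      (if (p : ℕ) = r then (Pi.single e 1 : ℕ → ℝ) i else 0) -
        if (p : ℕ) = r + 1 then (Pi.single ((e + 1) % 2) 1 : ℕ → ℝ) i else 0 := by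
  simp only [zvec, Prod.mk.injEq, Fin.ext_iff, antiregOrder_val, ite_and, Pi.single_apply,
    antiregVertex_eq_last_iff i.isLt, antiregVertex_eq_middle_iff i.isLt]

theorem sum_mul_zvec_antiregOrder (hk : 2 ≤ e + 2) {g : ℕ → ℝ} (hg₀ : g 0 = 0) (hgn : g n = 0)
    (p : Fin n) (i : Fin (e + 2)) :
    ∑ r : Fin (n - 1), g (r + 1) * zvec n (e + 2) hk r (p, antiregOrder (e + 2) i) =
      (Pi.single e (g (p + 1)) - Pi.single ((e + 1) % 2) (g p) : ℕ → ℝ) i := by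
  have hout : ∑ r ∈ range (n - 1), (if (p : ℕ) = r then g (r + 1) else 0) = g (p + 1) := by
    rw [sum_ite_eq, ite_eq_left_iff, mem_range]
    intro hp
    rw [show (p : ℕ) + 1 = n by omega, hgn]
  have hin : ∑ r ∈ range (n - 1), (if (p : ℕ) = r + 1 then g (r + 1) else 0) = g p := by
    obtain ⟨_ | q, hq⟩ := p
    · simp [hg₀]
    · simp only [Nat.add_right_cancel_iff]
      rw [sum_ite_eq, if_pos (mem_range.2 (by omega))]
  rw [← hout, ← hin, sum_range, sum_range]
  simp only [zvec_antiregOrder, mul_sub, sum_sub_distrib, Pi.sub_apply, Pi.single_apply, mul_ite,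
    mul_one, mul_zero]
  congr 1 <;> split_ifs <;> simp

theorem interLap_mulVec_antiregOrder (hk : 2 ≤ e + 2) {x : Fin n × Fin (e + 2) → ℝ}
    {X : ℕ → ℕ → ℝ} {g : ℕ → ℝ} (hX : ∀ (p : Fin n) j, x (p, antiregOrder (e + 2) j) = X p j)
    (hg₀ : g 0 = 0) (hgn : g n = 0)
    (hg : ∀ p, p + 1 < n → g (p + 1) = X p e - X (p + 1) ((e + 1) % 2))
    (p : Fin n) (i : Fin (e + 2)) :
    (interLap n (e + 2) hk *ᵥ x) (p, antiregOrder (e + 2) i) =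
      thresholdLap (e + 2) (antiregWeight (e + 2)) (X p) i +
        (Pi.single e (g (p + 1)) - Pi.single ((e + 1) % 2) (g p) : ℕ → ℝ) i := by
  have hflow (r : Fin (n - 1)) : zvec n (e + 2) hk r ⬝ᵥ x = g (r + 1) := by
    rw [zvec_dotProduct, ← antiregOrder_last, ← antiregOrder_middle, hX, hX, hg r (by omega)]
  rw [interLap, add_mulVec, sum_mulVec, Pi.add_apply, copiesLap_mulVec_apply,
    antiregLap_mulVec_antiregOrder (hX p), ← sum_mul_zvec_antiregOrder hk hg₀ hgn p i,
    Finset.sum_apply]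
  simp only [vecMulVec_mulVec, hflow, Pi.smul_apply, MulOpposite.smul_eq_mul_unop,
    MulOpposite.unop_op, mul_comm]

theorem eq_zero_of_interLap_mulVec_eq_smul (hk : 2 ≤ k) (hn : 1 ≤ n) {x : Fin n × Fin k → ℝ}
    {μ : ℝ} (h : interLap n k hk *ᵥ x = μ • x) (hx : x (firstKappa k n hk hn) = 0) : x = 0 := by
  obtain ⟨e, rfl⟩ := Nat.exists_eq_add_of_le' hk
  let X (p j : ℕ) : ℝ :=
    if hpj : p < n ∧ j < e + 2 then x (⟨p, hpj.1⟩, antiregOrder (e + 2) ⟨j, hpj.2⟩) else 0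
  let g (p : ℕ) : ℝ := if 0 < p ∧ p < n then X (p - 1) e - X p ((e + 1) % 2) else 0
  have hX (p : Fin n) (j : Fin (e + 2)) : x (p, antiregOrder (e + 2) j) = X p j := by
    simp [X]
  have hg₀ : g 0 = 0 := by simp [g]
  have hgn : g n = 0 := by simp [g]
  have hg (p : ℕ) (hp : p + 1 < n) : g (p + 1) = X p e - X (p + 1) ((e + 1) % 2) := by
    simp [g, hp]
  have hzero := (isChainLink_antiregWeight e).chain_eq_zero (μ := μ) hg₀ hgn hg
    (fun p hp i hi => ?_) ?_
  · ext ⟨p, i⟩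
    obtain ⟨j, rfl⟩ := (antiregOrder (e + 2)).surjective i
    rw [hX, hzero p p.isLt j j.isLt, Pi.zero_apply]
  · have hrow := interLap_mulVec_antiregOrder hk hX hg₀ hgn hg ⟨p, hp⟩ ⟨i, hi⟩
    rw [← hrow, h, Pi.smul_apply, hX, smul_eq_mul]
  · rw [← hX ⟨0, hn⟩ ⟨(e + 1) % 2, by omega⟩, antiregOrder_middle]
    exact hx

theorem extInterLap_mulVec_inl (hk : 2 ≤ k) (hn : 1 ≤ n) (x : Unit ⊕ Fin n × Fin k → ℝ) :
    (extInterLap k n hk hn *ᵥ x) (.inl ()) = x (.inl ()) - x (.inr (firstKappa k n hk hn)) := by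
  simp [mulVec, dotProduct, extInterLap, sub_eq_add_neg]

theorem extInterLap_mulVec_inr (hk : 2 ≤ k) (hn : 1 ≤ n) (x : Unit ⊕ Fin n × Fin k → ℝ) :
    (extInterLap k n hk hn *ᵥ x) ∘ .inr = interLap n k hk *ᵥ (x ∘ .inr) +
      Pi.single (firstKappa k n hk hn) (x (.inr (firstKappa k n hk hn)) - x (.inl ())) := by
  ext q
  simp only [Function.comp_apply, mulVec, dotProduct, extInterLap, ite_and, Fintype.sum_sum_type,
    univ_unique, sum_singleton, ite_mul, neg_mul, one_mul, zero_mul, sum_ite_irrel, sum_const_zero,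
    add_mul, sum_add_distrib, sum_ite_eq', mem_univ, if_true, Pi.add_apply, Pi.single_apply]
  split_ifs
  · ring
  · ring

end Chain

/-- appending one vertex adjacent to the vertex `κ̄` of the first
copy yields a graph that is Laplacian controllable by an input connected to the
appended vertex. -/
theorem extInterLap_controllable (k n : ℕ) (hk : 2 ≤ k) (hn : 1 ≤ n) :
    IsControllable (extInterLap k n hk hn)
      (fun p => if p = Sum.inl () then (1 : ℝ) else 0) := by
  refine isControllable_of_forall_eigenvector (extInterLap_isSymm hk hn) fun μ x hx hb => ?_
  have hinput : x (.inl ()) = 0 := by simpa [dotProduct] using hb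
  have hkappa : x (.inr (firstKappa k n hk hn)) = 0 := by
    have hrow := congrFun hx (.inl ())
    rw [extInterLap_mulVec_inl, Pi.smul_apply, hinput, smul_zero, zero_sub, neg_eq_zero] at hrow
    exact hrow
  have hinter : interLap n k hk *ᵥ (x ∘ .inr) = μ • (x ∘ .inr) := by
    have hrows := extInterLap_mulVec_inr hk hn x
    rw [hx, hkappa, hinput, sub_zero, Pi.single_zero, add_zero] at hrows
    exact hrows.symm
  have hzero := eq_zero_of_interLap_mulVec_eq_smul hk hn hinter hkappa
  ext (_ | q)
  exacts [hinput, congrFun hzero q]
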